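/- For any string T with RLE size m, the number of minimal absent words aub for T with R(aub) ≥ 2 such that a = u[1] or b = u[|u|] (type-5 MAWs) is O(m). More precisely, each type-5 MAW can be injectively associated with a boundary position k in T where T[k] ≠ T[k+1], so the number of type-5 MAWs is at most twice the number of run boundaries of T. -/

import Mathlib

/-- `w` occurs in `T` iff `w` is a (contiguous) substring, i.e. infix, of `T`. -/
def IsMAW {α : Type*} [DecidableEq α] (w T : List α) : Prop :=
  w ≠ [] ∧ ¬ w <:+: T ∧ ∀ v : List α, v <:+: w → v ≠ w → v <:+: T

/-- RLE size: the number of maximal runs of equal characters. -/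
def rleSize {α : Type*} [DecidableEq α] (w : List α) : ℕ :=
  (w.destutter (· ≠ ·)).length

/-- A bridge: length ≥ 2, first two characters differ, last two characters differ. -/
def IsBridge {α : Type*} (w : List α) : Prop :=
  2 ≤ w.length ∧ w[0]? ≠ w[1]? ∧ w[w.length - 2]? ≠ w[w.length - 1]?

/-- Truncate the first run to exponent 1. -/
def truncHead {α : Type*} [DecidableEq α] : List α → List α
  | [] => []
  | a :: t => a :: t.dropWhile (· == a)

/-- Remove the first run completely. -/
def dropHeadRun {α : Type*} [DecidableEq α] : List α → List α
  | [] => []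
  | a :: t => (a :: t).dropWhile (· == a)

/-- Remove the first run and truncate the new first run to exponent 1. -/
def leftReduce {α : Type*} [DecidableEq α] (w : List α) : List α :=
  truncHead (dropHeadRun w)

/-- `bridgeReduce w = w^{(1)}`: remove the first and last runs and truncate the
new outer runs to exponent 1; the empty string if `R(w) ≤ 2`. -/
def bridgeReduce {α : Type*} [DecidableEq α] (w : List α) : List α :=
  if rleSize w ≤ 2 then [] else (leftReduce ((leftReduce w).reverse)).reverse


instance {α : Type*} [DecidableEq α] : DecidablePred (IsBridge (α := α)) := fun w => by
  unfold IsBridge; infer_instance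

/-- Number of occurrences of `w` in `T`. -/
def countOcc {α : Type*} [DecidableEq α] (w T : List α) : ℕ :=
  ((List.range (T.length + 1)).filter
    (fun i => decide ((T.drop i).take w.length = w ∧ i + w.length ≤ T.length))).length

/-- `K(w)`: the set of bridge substrings `z` of `T` with `z^{(1)} = w`, as a `Finset`. -/
def KFin {α : Type*} [DecidableEq α] (T w : List α) : Finset (List α) :=
  T.sublists.toFinset.filter (fun z => z <:+: T ∧ IsBridge z ∧ bridgeReduce z = w)

/-- `K₊(w) = { z ∈ K(w) : |K(z)| ≥ 2 }`. -/
def KplusFin {α : Type*} [DecidableEq α] (T w : List α) : Finset (List α) :=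
  (KFin T w).filter (fun z => 2 ≤ (KFin T z).card)

/-- `K^{(t)}(w)`: bridge substrings `z` of `T` with `z^{(t)} = w`. -/
def KIter {α : Type*} [DecidableEq α] (T w : List α) (t : ℕ) : Finset (List α) :=
  T.sublists.toFinset.filter (fun z => z <:+: T ∧ IsBridge z ∧ bridgeReduce^[t] z = w)

/-- `K₊^{(t)}(w) = { z ∈ K^{(t)}(w) : |K(z)| ≥ 2 }`. -/
def KplusIter {α : Type*} [DecidableEq α] (T w : List α) (t : ℕ) : Finset (List α) :=
  (KIter T w t).filter (fun z => 2 ≤ (KFin T z).card)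

/-- `K(w)` as a set. -/
def KSet {α : Type*} [DecidableEq α] (T w : List α) : Set (List α) :=
  {z | z <:+: T ∧ IsBridge z ∧ bridgeReduce z = w}

/-- Type-3 MAW: a MAW `a u b` with `R = 3`, `a ≠ u[1]`, `b ≠ u[|u|]`. -/
def IsType3MAW {α : Type*} [DecidableEq α] (w T : List α) : Prop :=
  IsMAW w T ∧ rleSize w = 3 ∧
    ∃ (a b : α) (u : List α), u ≠ [] ∧ w = a :: u ++ [b] ∧
      u.head? ≠ some a ∧ u.getLast? ≠ some b

/-- Type-4 MAW: a MAW `a u b` with `R ≥ 4`, `a ≠ u[1]`, `b ≠ u[|u|]`. -/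
def IsType4MAW {α : Type*} [DecidableEq α] (w T : List α) : Prop :=
  IsMAW w T ∧ 4 ≤ rleSize w ∧
    ∃ (a b : α) (u : List α), u ≠ [] ∧ w = a :: u ++ [b] ∧
      u.head? ≠ some a ∧ u.getLast? ≠ some b

/-- Type-5 MAW: a MAW `a u b` with `R ≥ 2` and `a = u[1]` or `b = u[|u|]`. -/
def IsType5MAW {α : Type*} [DecidableEq α] (w T : List α) : Prop :=
  IsMAW w T ∧ 2 ≤ rleSize w ∧
    ∃ (a b : α) (u : List α), u ≠ [] ∧ w = a :: u ++ [b] ∧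
      (u.head? = some a ∨ u.getLast? = some b)

/-- The exponent of the longest maximal run of `a` in `T`. -/
noncomputable def maxRunLen {α : Type*} [DecidableEq α] (a : α) (T : List α) : ℕ :=
  sSup {q : ℕ | List.replicate q a <:+: T}

/-- `w` occurs in `T` starting at position `k` (0-based). -/
def OccursAt {α : Type*} [DecidableEq α] (w T : List α) (k : ℕ) : Prop :=
  k + w.length ≤ T.length ∧ (T.drop k).take w.length = w

/-- Type-5 MAWs whose first two characters agree, in a form convenient for reversal. -/
def LeftMAW {α : Type*} [DecidableEq α] (w T : List α) : Prop :=
  IsMAW w T ∧ (∃ x ∈ w, ∃ y ∈ w, x ≠ y) ∧ ∃ a u, w = a :: a :: u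

/-- The proper run boundaries of `T`. -/
def innerB {α : Type*} [DecidableEq α] (T : List α) : Finset ℕ :=
  (Finset.range (T.length - 1)).filter (fun k => T[k]? ≠ T[k + 1]?)

/-- The association of a left type-5 MAW with a boundary. -/
def Assoc {α : Type*} (T w : List α) (k : ℕ) : Prop :=
  ∃ (p : ℕ) (a c : α) (v s t : List α), 1 ≤ p ∧ c ≠ a ∧
    w = List.replicate (p + 1) a ++ c :: v ∧
    T = (s ++ List.replicate p a) ++ (c :: v ++ t) ∧ k + 1 = s.length + p ∧
    s.getLast? ≠ some a

theorem rle_two {α : Type*} [DecidableEq α] (w : List α) (h : 2 ≤ rleSize w) :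
    ∃ x ∈ w, ∃ y ∈ w, x ≠ y := by
  unfold rleSize at h
  have hs := List.destutter_sublist (R := (· ≠ · : α → α → Prop)) w
  have hc := List.isChain_destutter (R := (· ≠ · : α → α → Prop)) w
  revert h hs hc
  generalize w.destutter (· ≠ ·) = d
  intro h hs hc
  match d, h with
  | x :: y :: r, _ =>
    refine ⟨x, hs.subset (by simp), y, hs.subset (by simp), ?_⟩
    simp at hc
    exact hc.1

theorem maw_reverse {α : Type*} [DecidableEq α] {w T : List α} (h : IsMAW w T) :
    IsMAW w.reverse T.reverse := by
  obtain ⟨h1, h2, h3⟩ := h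
  refine ⟨by simpa using h1, by simpa [List.reverse_infix] using h2, ?_⟩
  intro v hv hne
  have := h3 v.reverse (by rw [← List.reverse_infix]; simpa using hv)
    (by intro e; apply hne; rw [← e]; simp)
  rw [← List.reverse_infix] at this
  simpa using this

theorem split_run {α : Type*} [DecidableEq α] (a : α) (u : List α)
    (h : ∃ x ∈ u, x ≠ a) : ∃ p c v, c ≠ a ∧ u = List.replicate p a ++ c :: v := by
  induction u with
  | nil => simp at h
  | cons b u ih =>
    by_cases hb : b = a
    · subst hb
      obtain ⟨p, c, v, hc, rfl⟩ := ih (by simpa using h)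
      exact ⟨p + 1, c, v, hc, by simp [List.replicate_succ]⟩
    · exact ⟨0, b, u, hb, by simp⟩

theorem run_unique {α : Type*} (a : α) (p q : ℕ) (s s' : List α)
    (hs : s.getLast? ≠ some a) (hs' : s'.getLast? ≠ some a)
    (h : s ++ List.replicate p a = s' ++ List.replicate q a) : p = q := by
  induction p generalizing q with
  | zero =>
    cases q with
    | zero => rfl
    | succ q =>
      simp at h
      subst h
      simp [List.replicate_succ'] at hs
  | succ p ih =>
    cases q with
    | zero =>
      simp at h
      subst h
      simp [List.replicate_succ'] at hs'
    | succ q =>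
      rw [List.replicate_succ', List.replicate_succ', ← List.append_assoc,
        ← List.append_assoc] at h
      have := ih q (List.append_cancel_right h)
      omega

theorem maw_prefix {α : Type*} [DecidableEq α] {w w' T : List α} (h : IsMAW w T)
    (h' : IsMAW w' T) (hp : w <+: w') : w = w' := by
  by_contra hne
  exact h.2.1 (h'.2.2 w hp.isInfix hne)

theorem assoc_inj {α : Type*} [DecidableEq α] {w w' T : List α} {k : ℕ} (h : IsMAW w T)
    (h' : IsMAW w' T) (ha : Assoc T w k) (ha' : Assoc T w' k) : w = w' := by
  obtain ⟨p, a, c, v, s, t, hp, hc, hw, hT, hk, hs⟩ := ha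
  obtain ⟨p', a', c', v', s', t', hp', hc', hw', hT', hk', hs'⟩ := ha'
  rw [hT] at hT'
  obtain ⟨e1, e2⟩ := List.append_inj hT' (by simp; omega)
  have haa : a = a' := by
    have := congrArg List.getLast? e1
    obtain ⟨p, rfl⟩ : ∃ r, p = r + 1 := ⟨p - 1, by omega⟩
    obtain ⟨p', rfl⟩ : ∃ r, p' = r + 1 := ⟨p' - 1, by omega⟩
    simpa [List.replicate_succ', ← List.append_assoc] using this
  subst haa
  have hpp := run_unique a p p' s s' hs hs' e1
  subst hpp
  have q1 : c :: v <+: c :: v ++ t := List.prefix_append _ _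
  have q2 : c' :: v' <+: c :: v ++ t := by rw [e2]; exact List.prefix_append _ _
  rcases List.prefix_or_prefix_of_prefix q1 q2 with q | q
  · apply maw_prefix h h'
    rw [hw, hw']
    exact (List.prefix_append_right_inj _).2 q
  · symm
    apply maw_prefix h' h
    rw [hw, hw']
    exact (List.prefix_append_right_inj _).2 q

theorem assoc_exists {α : Type*} [DecidableEq α] {w T : List α} (h : LeftMAW w T) :
    ∃ k ∈ innerB T, Assoc T w k := by
  obtain ⟨hm, ⟨x, hx, y, hy, hxy⟩, a, u, rfl⟩ := h
  have hex : ∃ z ∈ u, z ≠ a := by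
    by_contra hcon
    push Not at hcon
    apply hxy
    have : ∀ z ∈ a :: a :: u, z = a := by simpa using hcon
    rw [this x hx, this y hy]
  obtain ⟨p, c, v, hc, rfl⟩ := split_run a u hex
  obtain ⟨s, t, hst⟩ := hm.2.2 (a :: (List.replicate p a ++ c :: v))
    (List.suffix_cons _ _).isInfix (by intro e; simpa using congrArg List.length e)
  have hT : T = (s ++ List.replicate (p + 1) a) ++ (c :: v ++ t) := by
    rw [← hst]; simp [List.replicate_succ]
  refine ⟨s.length + p, ?_, p + 1, a, c, v, s, t, by omega, hc, ?_, hT, by omega, ?_⟩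
  · unfold innerB
    simp only [Finset.mem_filter, Finset.mem_range]
    have e1 : T[s.length + p]? = some a := by
      rw [hT, List.getElem?_append_left (by simp), List.getElem?_append_right (by simp)]
      simp [List.getElem?_replicate]
    have e2 : T[s.length + p + 1]? = some c := by
      rw [hT, List.getElem?_append_right (by simp; omega)]
      have : s.length + p + 1 - (s ++ List.replicate (p + 1) a).length = 0 := by
        simp
      rw [this]; simp
    refine ⟨?_, ?_⟩
    · rw [hT]; simp; omega
    · rw [e1, e2]; simpa using hc.symm
  · simp [List.replicate_succ]
  · intro hl
    obtain ⟨s', rfl⟩ := List.getLast?_eq_some_iff.1 hl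
    apply hm.2.1
    exact ⟨s', t, by rw [← hst]; simp⟩

theorem left_bound {α : Type*} [DecidableEq α] (T : List α) :
    {w : List α | LeftMAW w T}.Finite ∧
      {w : List α | LeftMAW w T}.ncard ≤ (innerB T).card := by
  classical
  let f : List α → ℕ := fun w => if h : LeftMAW w T then (assoc_exists h).choose else 0
  have hf : ∀ w, LeftMAW w T → f w ∈ innerB T ∧ Assoc T w (f w) := by
    intro w h
    simp only [f, dif_pos h]
    exact (assoc_exists h).choose_spec
  have hmaps : Set.MapsTo f {w : List α | LeftMAW w T} (innerB T : Set ℕ) :=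
    fun w h => (hf w h).1
  have hinj : Set.InjOn f {w : List α | LeftMAW w T} := by
    intro w h w' h' e
    refine assoc_inj h.1 h'.1 (hf w h).2 ?_
    rw [e]
    exact (hf w' h').2
  refine ⟨Set.Finite.of_injOn hmaps hinj (innerB T).finite_toSet, ?_⟩
  have := Set.ncard_le_ncard_of_injOn f hmaps hinj (innerB T).finite_toSet
  simpa using this

theorem innerB_reverse {α : Type*} [DecidableEq α] (T : List α) :
    (innerB T.reverse).card ≤ (innerB T).card := by
  apply Finset.card_le_card_of_injOn (fun k => T.length - 2 - k)
  · intro k hk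
    simp only [innerB, Finset.coe_filter, Finset.mem_range, Set.mem_setOf_eq,
      List.length_reverse] at hk ⊢
    obtain ⟨h1, h2⟩ := hk
    rw [List.getElem?_reverse (by omega), List.getElem?_reverse (by omega)] at h2
    refine ⟨by omega, fun e => h2 ?_⟩
    rw [show T.length - 1 - k = T.length - 2 - k + 1 by omega, ← e]
    congr 1
    omega
  · intro k hk k' hk' e
    simp only [innerB, Finset.coe_filter, Finset.mem_range, Set.mem_setOf_eq,
      List.length_reverse] at hk hk' e
    omega

theorem stmt3 {α : Type*} [DecidableEq α] (T : List α) :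
    {w : List α | IsType5MAW w T}.ncard ≤
      2 * ((Finset.range T.length).filter (fun k => T[k]? ≠ T[k + 1]?)).card := by
  classical
  have hsub : {w : List α | IsType5MAW w T} ⊆ {w | LeftMAW w T} ∪
      Set.image List.reverse {w | LeftMAW w T.reverse} := by
    rintro w ⟨hm, hr, a, b, u, hu, hw, hd⟩
    have hxy := rle_two w hr
    rcases hd with hd | hd
    · left
      refine ⟨hm, hxy, ?_⟩
      obtain ⟨u', rfl⟩ := List.head?_eq_some_iff.1 hd
      exact ⟨a, u' ++ [b], by simp [hw]⟩
    · right
      refine ⟨w.reverse, ⟨maw_reverse hm, by simpa using hxy, ?_⟩, by simp⟩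
      obtain ⟨u', rfl⟩ := List.getLast?_eq_some_iff.1 hd
      exact ⟨b, u'.reverse ++ [a], by simp [hw]⟩
  obtain ⟨f1, b1⟩ := left_bound T
  obtain ⟨f2, b2⟩ := left_bound T.reverse
  have h1 := Set.ncard_le_ncard hsub (f1.union (f2.image _))
  have h2 := Set.ncard_union_le {w | LeftMAW w T} (Set.image List.reverse {w | LeftMAW w T.reverse})
  have h3 := Set.ncard_image_le (f := List.reverse) f2
  have h4 := innerB_reverse T
  have h5 : (innerB T).card ≤
      ((Finset.range T.length).filter (fun k => T[k]? ≠ T[k + 1]?)).card := by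
    apply Finset.card_le_card
    intro k hk
    simp only [innerB, Finset.mem_filter, Finset.mem_range] at hk ⊢
    exact ⟨by omega, hk.2⟩
  omega
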